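/- Fix a natural number c ≥ 1. Then the set of continuous functions f : [0,1] → ℝ with f(0) = 0 that are piecewise along the set of affine functions { t ↦ a + m t : a ∈ ℤ, m ∈ ℤ, |m| ≤ c } is finite. (This is the combinatorial content of the theorem that for a fixed concordance genus c there are only finitely many possibilities for the knot Floer invariant Υ_K(t) of knots K of concordance genus c: on [0,1], Υ_K is such a function.) -/

import Mathlib

/-- A function `f` on `[0,1]` is *piecewise along* a set `S` of functions `ℝ → ℝ`
if there are finitely many points `0 = t₀ < t₁ < ⋯ < t_k = 1` such that on each
subinterval `[t_{i-1}, t_i]` the function `f` coincides with some element of `S`. -/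
def PiecewiseAlong (S : Set (ℝ → ℝ)) (f : Set.Icc (0 : ℝ) 1 → ℝ) : Prop :=
  ∃ (k : ℕ) (t : ℕ → ℝ), t 0 = 0 ∧ t k = 1 ∧ (∀ i, i < k → t i < t (i + 1)) ∧
    ∀ i, i < k → ∃ g ∈ S, ∀ x : Set.Icc (0 : ℝ) 1,
      t i ≤ (x : ℝ) → (x : ℝ) ≤ t (i + 1) → f x = g (x : ℝ)

/-!
A function that is piecewise along `K`-Lipschitz functions is itself `K`-Lipschitz, so `f 0` bounds
the intercept of every piece, and only finitely many functions `g i` can occur as pieces. These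
cross in finitely many points, whose complement in `[0, 1]` has finitely many connected components.
Away from the crossings, the index `i` with `f x = g i x` is unique, and it is locally constant in
`x` because the sets `{x | f x = g i x}` are closed and finite in number. Hence `f` is determined on
a dense set, and so everywhere, by one index per component.
-/

open Set
open scoped NNReal Topology

section Selections

variable {X Y ι : Type*} [TopologicalSpace X] [TopologicalSpace Y] [T2Space Y] [Finite ι]
  {g : ι → X → Y}

theorem finite_locallyConstant [Finite (ConnectedComponents X)] : Finite (LocallyConstant X ι) := by
  obtain ⟨rep, mk_rep⟩ := (ConnectedComponents.surjective_coe (α := X)).hasRightInverse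
  refine Finite.of_injective (fun (σ : LocallyConstant X ι) c ↦ σ (rep c)) fun σ τ h ↦
    LocallyConstant.ext fun x ↦ ?_
  have apply_rep (ρ : LocallyConstant X ι) : ρ (rep x) = ρ x :=
    ρ.apply_eq_of_isPreconnected isPreconnected_connectedComponent
      (ConnectedComponents.coe_eq_coe'.1 (mk_rep x)) mem_connectedComponent
  rw [← apply_rep σ, ← apply_rep τ]
  exact congr_fun h x

theorem exists_locallyConstant_selector (hg : ∀ i, Continuous (g i))
    (hinj : ∀ x, Function.Injective (g · x)) {f : X → Y} (hf : Continuous f)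
    (hsel : ∀ x, ∃ i, f x = g i x) :
    ∃ σ : LocallyConstant X ι, ∀ x, f x = g (σ x) x := by
  choose σ hσ using hsel
  have fiber_eq (i : ι) : σ ⁻¹' {i} = {x | f x = g i x} := by
    ext x
    exact ⟨fun h ↦ h ▸ hσ x, fun h ↦ hinj x ((hσ x).symm.trans h)⟩
  have isClosed_preimage (s : Set ι) : IsClosed (σ ⁻¹' s) := by
    rw [← biUnion_preimage_singleton]
    exact s.toFinite.isClosed_biUnion fun i _ ↦ fiber_eq i ▸ isClosed_eq hf (hg i)
  exact ⟨⟨σ, fun s ↦ isClosed_compl_iff.1 (isClosed_preimage sᶜ)⟩, hσ⟩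

theorem finite_selections_of_injective [Finite (ConnectedComponents X)]
    (hg : ∀ i, Continuous (g i)) (hinj : ∀ x, Function.Injective (g · x)) :
    {f : C(X, Y) | ∀ x, ∃ i, f x = g i x}.Finite := by
  have := finite_locallyConstant (X := X) (ι := ι)
  refine ((finite_range fun (σ : LocallyConstant X ι) x ↦ g (σ x) x).preimage
    DFunLike.coe_injective.injOn).subset fun f hsel ↦ ?_
  obtain ⟨σ, hσ⟩ := exists_locallyConstant_selector hg hinj f.continuous hsel
  exact ⟨σ, funext fun x ↦ (hσ x).symm⟩

theorem finite_selections_of_dense {U : Set X} (hU : Dense U)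
    [Finite (ConnectedComponents U)] (hg : ∀ i, Continuous (g i))
    (hinj : ∀ x ∈ U, Function.Injective (g · x)) :
    {f : C(X, Y) | ∀ x, ∃ i, f x = g i x}.Finite := by
  have restrict_injective : Function.Injective (ContinuousMap.restrict U : C(X, Y) → C(U, Y)) :=
    fun f f' h ↦ DFunLike.coe_injective <| f.continuous.ext_on hU f'.continuous fun x hx ↦
      DFunLike.congr_fun h ⟨x, hx⟩
  have finite_on_U := finite_selections_of_injective (X := U) (g := fun i x ↦ g i x)
    (fun i ↦ (hg i).comp continuous_subtype_val) fun x ↦ hinj x x.2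
  exact (finite_on_U.preimage restrict_injective.injOn).subset fun f hsel x ↦ hsel x

end Selections

section LinearOrder

variable {X : Type*} [ConditionallyCompleteLinearOrder X] [DenselyOrdered X] [TopologicalSpace X]
  [OrderTopology X]

theorem finite_connectedComponents_compl {P : Set X} (hP : P.Finite) :
    Finite (ConnectedComponents ↥Pᶜ) := by
  have := hP.to_subtype
  obtain ⟨rep, mk_rep⟩ := (ConnectedComponents.surjective_coe (α := ↥Pᶜ)).hasRightInverse
  let pointsBelow (c : ConnectedComponents ↥Pᶜ) : Set P := {p | (p : X) < rep c}
  refine Finite.of_injective pointsBelow fun c d hcd ↦ ?_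
  have uIcc_subset : uIcc (rep c : X) (rep d) ⊆ Pᶜ := by
    intro p hp hpP
    have below_iff : p < rep c ↔ p < rep d := Set.ext_iff.1 hcd ⟨p, hpP⟩
    have hpc : p ≠ rep c := fun h ↦ (rep c).2 (h ▸ hpP)
    have hpd : p ≠ rep d := fun h ↦ (rep d).2 (h ▸ hpP)
    rcases mem_uIcc.1 hp with ⟨hcp, hpd'⟩ | ⟨hdp, hpc'⟩
    · exact hcp.not_gt (below_iff.2 (hpd'.lt_of_ne hpd))
    · exact hdp.not_gt (below_iff.1 (hpc'.lt_of_ne hpc))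
  have isPreconnected_interval :
      IsPreconnected ((↑) ⁻¹' uIcc (rep c : X) (rep d) : Set ↥Pᶜ) := by
    rw [← Topology.IsInducing.subtypeVal.isPreconnected_image, Subtype.image_preimage_coe,
      inter_eq_right.2 uIcc_subset]
    exact isPreconnected_uIcc
  rw [← mk_rep c, ← mk_rep d]
  exact ConnectedComponents.coe_eq_coe'.2
    (isPreconnected_interval.subset_connectedComponent right_mem_uIcc left_mem_uIcc)

theorem finite_selections_of_finite_crossings [∀ x : X, (𝓝[≠] x).NeBot]
    {Y ι : Type*} [TopologicalSpace Y] [T2Space Y] [Finite ι] {g : ι → X → Y}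
    (hg : ∀ i, Continuous (g i)) (hcross : Pairwise fun i j ↦ {x | g i x = g j x}.Finite) :
    {f : C(X, Y) | ∀ x, ∃ i, f x = g i x}.Finite := by
  let crossings : Set X := ⋃ (i) (j) (_ : i ≠ j), {x | g i x = g j x}
  have finite_crossings : crossings.Finite :=
    finite_iUnion fun i ↦ finite_iUnion fun j ↦ finite_iUnion fun hij ↦ hcross hij
  have := finite_connectedComponents_compl finite_crossings
  have dense_compl : Dense crossingsᶜ := by
    simpa only [compl_eq_univ_sdiff] using dense_univ.sdiff_finite finite_crossings
  refine finite_selections_of_dense dense_compl hg fun x hx i j hij ↦ ?_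
  by_contra hne
  exact hx (mem_iUnion₂.2 ⟨i, j, mem_iUnion.2 ⟨hne, hij⟩⟩)

end LinearOrder

theorem lipschitzOnWith_union {α β : Type*} [PseudoMetricSpace α] [PseudoMetricSpace β]
    {K : ℝ≥0} {f : α → β} {s t : Set α} {b : α} (hs : LipschitzOnWith K f s)
    (ht : LipschitzOnWith K f t) (hbs : b ∈ s) (hbt : b ∈ t)
    (hb : ∀ x ∈ s, ∀ y ∈ t, dist x b + dist b y ≤ dist x y) : LipschitzOnWith K f (s ∪ t) := by
  have across : ∀ x ∈ s, ∀ y ∈ t, dist (f x) (f y) ≤ K * dist x y := fun x hx y hy ↦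
    calc dist (f x) (f y) ≤ dist (f x) (f b) + dist (f b) (f y) := dist_triangle _ _ _
      _ ≤ K * dist x b + K * dist b y :=
        add_le_add (hs.dist_le_mul x hx b hbs) (ht.dist_le_mul b hbt y hy)
      _ = K * (dist x b + dist b y) := by ring
      _ ≤ K * dist x y := by gcongr; exact hb x hx y hy
  refine LipschitzOnWith.of_dist_le_mul ?_
  rintro x (hx | hx) y (hy | hy)
  · exact hs.dist_le_mul x hx y hy
  · exact across x hx y hy
  · simpa only [dist_comm] using across y hy x hx
  · exact ht.dist_le_mul x hx y hy

theorem exists_lt_mem_Icc_succ {α : Type*} [LinearOrder α] {t : ℕ → α} {x : α} {k : ℕ}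
    (h0 : t 0 ≤ x) (hk : x ≤ t (k + 1)) : ∃ i < k + 1, x ∈ Icc (t i) (t (i + 1)) := by
  induction k with
  | zero => exact ⟨0, one_pos, h0, hk⟩
  | succ k ih =>
    rcases le_total x (t (k + 1)) with hx | hx
    · obtain ⟨i, hi, hxi⟩ := ih hx
      exact ⟨i, hi.trans (k + 1).lt_succ_self, hxi⟩
    · exact ⟨k + 1, (k + 1).lt_succ_self, hx, hk⟩

namespace PiecewiseAlong

variable {S : Set (ℝ → ℝ)} {K : ℝ≥0} {f : Icc (0 : ℝ) 1 → ℝ}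

theorem exists_mem_eq (hf : PiecewiseAlong S f) (x : Icc (0 : ℝ) 1) : ∃ g ∈ S, f x = g x := by
  obtain ⟨_ | k, t, ht0, htk, -, hpiece⟩ := hf
  · exact absurd (ht0.symm.trans htk) zero_ne_one
  · obtain ⟨i, hi, hxi⟩ := exists_lt_mem_Icc_succ (ht0.trans_le x.2.1) (x.2.2.trans_eq htk.symm)
    obtain ⟨g, hgS, hfg⟩ := hpiece i hi
    exact ⟨g, hgS, hfg x hxi.1 hxi.2⟩

theorem lipschitzWith (hf : PiecewiseAlong S f)
    (hS : ∀ g ∈ S, LipschitzOnWith K g (Icc 0 1)) : LipschitzWith K f := by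
  obtain ⟨k, t, ht0, htk, hlt, hpiece⟩ := hf
  have ht_mono : MonotoneOn t (Iic k) := (strictMonoOn_Iic_of_lt_succ hlt).monotoneOn
  have ht_mem : ∀ i ≤ k, t i ∈ Icc (0 : ℝ) 1 := fun i hi ↦
    ⟨ht0 ▸ ht_mono k.zero_le hi i.zero_le, htk ▸ ht_mono hi self_mem_Iic hi⟩
  have lipschitz_piece : ∀ i < k, LipschitzOnWith K f {x | (x : ℝ) ∈ Icc (t i) (t (i + 1))} := by
    intro i hi
    obtain ⟨g, hgS, hfg⟩ := hpiece i hi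
    refine LipschitzOnWith.of_dist_le_mul fun x hx y hy ↦ ?_
    rw [hfg x hx.1 hx.2, hfg y hy.1 hy.2]
    exact (hS g hgS).dist_le_mul x x.2 y y.2
  have lipschitz_initial : ∀ i ≤ k, LipschitzOnWith K f {x | (x : ℝ) ≤ t i} := by
    intro i
    induction i with
    | zero =>
      have eq_zero : ∀ x ∈ {x : Icc (0 : ℝ) 1 | (x : ℝ) ≤ t 0}, x = 0 := fun x hx ↦
        Subtype.ext (le_antisymm (hx.trans_eq ht0) x.2.1)
      refine fun _ ↦ LipschitzOnWith.of_dist_le_mul fun x hx y hy ↦ ?_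
      simp only [eq_zero x hx, eq_zero y hy, dist_self, mul_zero, le_refl]
    | succ i ih =>
      intro hi
      let node : Icc (0 : ℝ) 1 := ⟨t i, ht_mem i (i.le_succ.trans hi)⟩
      have dist_node : ∀ x : Icc (0 : ℝ) 1, (x : ℝ) ≤ t i → ∀ y : Icc (0 : ℝ) 1,
          (y : ℝ) ∈ Icc (t i) (t (i + 1)) → dist x node + dist node y ≤ dist x y :=
        fun x hx y hy ↦ (dist_add_dist_of_mem_segment (x := (x : ℝ)) (z := y)
          (Icc_subset_segment ⟨hx, hy.1⟩)).le
      exact (lipschitzOnWith_union (ih (i.le_succ.trans hi)) (lipschitz_piece i hi)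
        (b := node) (le_refl (t i)) ⟨le_rfl, (hlt i hi).le⟩ dist_node).mono fun x hx ↦
          (le_total (x : ℝ) (t i)).imp id fun h ↦ ⟨h, hx⟩
  exact lipschitzOnWith_univ.1 <| (lipschitz_initial k le_rfl).mono fun x _ ↦
    x.2.2.trans_eq htk.symm

theorem exists_mem_eq_abs_le (hf : PiecewiseAlong S f)
    (hS : ∀ g ∈ S, LipschitzOnWith K g (Icc 0 1)) (x : Icc (0 : ℝ) 1) :
    ∃ g ∈ S, f x = g x ∧ |g 0| ≤ |f 0| + 2 * K := by
  obtain ⟨g, hgS, hfg⟩ := hf.exists_mem_eq x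
  have le_of_dist_le {r : ℝ} (h : r ≤ K * dist x 0) : r ≤ K := h.trans <|
    mul_le_of_le_one_right K.2 (by simpa [Subtype.dist_eq, abs_of_nonneg x.2.1] using x.2.2)
  have hf_var : |f x - f 0| ≤ K := le_of_dist_le ((hf.lipschitzWith hS).dist_le_mul x 0)
  have hg_var : |g x - g 0| ≤ K :=
    le_of_dist_le ((hS g hgS).dist_le_mul x x.2 0 (left_mem_Icc.2 zero_le_one))
  refine ⟨g, hgS, hfg, ?_⟩
  calc |g 0| = |f 0 + (f x - f 0) - (g x - g 0)| := congrArg abs (by rw [hfg]; ring)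
    _ ≤ |f 0| + |f x - f 0| + |g x - g 0| := (abs_sub _ _).trans (by gcongr; exact abs_add_le _ _)
    _ ≤ |f 0| + 2 * K := by linarith

end PiecewiseAlong

section Lines

theorem lipschitzWith_line {a m : ℝ} {K : ℝ≥0} (hm : |m| ≤ K) :
    LipschitzWith K fun t ↦ a + m * t :=
  LipschitzWith.of_dist_le_mul fun x y ↦ by
    rw [dist_add_left, Real.dist_eq, Real.dist_eq, ← mul_sub, abs_mul]
    gcongr

theorem subsingleton_line_inter {R : Type*} [CommRing R] [NoZeroDivisors R] {a m a' m' : R}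
    (hne : (fun t ↦ a + m * t) ≠ fun t ↦ a' + m' * t) :
    {t | a + m * t = a' + m' * t}.Subsingleton := by
  intro x (hx : a + m * x = a' + m' * x) y (hy : a + m * y = a' + m' * y)
  have hmul : (m - m') * (x - y) = 0 := by linear_combination hx - hy
  refine sub_eq_zero.1 ((mul_eq_zero.1 hmul).resolve_left fun hm ↦ hne ?_)
  funext t
  linear_combination hx + (t - x) * hm

/-- The affine functions with integer intercept and integer slope of absolute value at most `c`,
the candidates for the pieces of `Υ_K` on `[0, 1]` when `K` has concordance genus `c`. -/
def integralLines (c : ℕ) : Set (ℝ → ℝ) :=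
  {g | ∃ a m : ℤ, |m| ≤ (c : ℤ) ∧ g = fun t : ℝ => (a : ℝ) + (m : ℝ) * t}

variable {c : ℕ}

theorem lipschitzWith_of_mem_integralLines {g : ℝ → ℝ} (hg : g ∈ integralLines c) :
    LipschitzWith c g := by
  obtain ⟨a, m, hm, rfl⟩ := hg
  exact lipschitzWith_line (by simpa using (Int.cast_le (R := ℝ)).2 hm)

theorem pairwise_integralLines_finite_inter :
    (integralLines c).Pairwise fun g h ↦ {t | g t = h t}.Finite := by
  rintro _ ⟨a, m, -, rfl⟩ _ ⟨a', m', -, rfl⟩ hne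
  exact (subsingleton_line_inter hne).finite

theorem finite_integralLines_abs_le (r : ℝ) : {g ∈ integralLines c | |g 0| ≤ r}.Finite := by
  refine (((finite_Icc ⌈-r⌉ ⌊r⌋).prod (finite_Icc (-c : ℤ) c)).image
    fun p t ↦ (p.1 : ℝ) + p.2 * t).subset ?_
  rintro _ ⟨⟨a, m, hm, rfl⟩, ha⟩
  obtain ⟨hra, har⟩ : -r ≤ a ∧ (a : ℝ) ≤ r := by simpa only [mul_zero, add_zero, abs_le] using ha
  exact ⟨(a, m), ⟨⟨Int.ceil_le.2 hra, Int.le_floor.2 har⟩, abs_le.1 hm⟩, rfl⟩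

end Lines

theorem finitely_many_upsilon_shapes_general {S : Set (ℝ → ℝ)} {K : ℝ≥0}
    (hLip : ∀ g ∈ S, LipschitzOnWith K g (Icc 0 1))
    (hcross : S.Pairwise fun g h ↦ {x ∈ Icc (0 : ℝ) 1 | g x = h x}.Finite)
    (hfin : ∀ r : ℝ, {g ∈ S | |g 0| ≤ r}.Finite) (v : ℝ) :
    {f : C(Icc (0 : ℝ) 1, ℝ) | f 0 = v ∧ PiecewiseAlong S f}.Finite := by
  let T : Set (ℝ → ℝ) := {g ∈ S | |g 0| ≤ |v| + 2 * K}
  have : Finite T := (hfin _).to_subtype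
  have continuous_T (g : T) : Continuous fun x : Icc (0 : ℝ) 1 ↦ g.1 x :=
    (hLip g g.2.1).continuousOn.domRestrict
  have crossings_T : Pairwise fun g h : T ↦ {x : Icc (0 : ℝ) 1 | g.1 x = h.1 x}.Finite := by
    intro g h hne
    exact ((hcross g.2.1 h.2.1 (Subtype.coe_ne_coe.2 hne)).preimage
      Subtype.val_injective.injOn).subset fun x hx ↦ ⟨x.2, hx⟩
  refine (finite_selections_of_finite_crossings continuous_T crossings_T).subset ?_
  rintro f ⟨rfl, hf⟩ x
  obtain ⟨g, hgS, hfg, hg0⟩ := hf.exists_mem_eq_abs_le hLip x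
  exact ⟨⟨g, hgS, hg0⟩, hfg⟩

/-- For a fixed concordance genus `c ≥ 1`, there are only finitely many continuous
functions `f : [0,1] → ℝ` with `f 0 = 0` that are piecewise along the set of affine
functions with integer intercept and integer slope of absolute value at most `c`.
This is the combinatorial content of the theorem that for a fixed concordance genus
there are only finitely many possibilities for the invariant `Υ_K(t)`. -/
theorem finitely_many_upsilon_shapes (c : ℕ) (hc : 1 ≤ c) :
    {f : C(Set.Icc (0 : ℝ) 1, ℝ) |
        f ⟨0, Set.left_mem_Icc.mpr zero_le_one⟩ = 0 ∧
        PiecewiseAlong {g | ∃ a m : ℤ, |m| ≤ (c : ℤ) ∧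
          g = fun t : ℝ => (a : ℝ) + (m : ℝ) * t} f}.Finite :=
  finitely_many_upsilon_shapes_general (S := integralLines c)
    (fun _ hg ↦ (lipschitzWith_of_mem_integralLines hg).lipschitzOnWith)
    (pairwise_integralLines_finite_inter.mono' fun _ _ h ↦ h.subset fun _ ht ↦ ht.2)
    finite_integralLines_abs_le 0
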